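/- The permutation complexity τ of the Thue–Morse word satisfies the following recursion: (i) if r ≥ 3 and 2n+1 = 2^r − 1, then τ(2n+1) = τ(n+1) + τ(n+2) − 2^{r−1}; (ii) if r ≥ 3 and 2n = 2^r, then τ(2n) = 2·(τ(n+1) − 2^{r−1}); (iii) if n ≥ 3 and n+1 is not a power of 2, then τ(2n+1) = τ(n+1) + τ(n+2); (iv) if n ≥ 3 and n is not a power of 2, then τ(2n) = 2·τ(n+1). -/

import Mathlib

/-!
The Thue–Morse word is fixed by `0 ↦ 01`, `1 ↦ 10`, and the order of its suffixes behaves well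
under this doubling (`prec_even_even`, `prec_odd_odd`, `prec_cross`): two suffixes at even
positions compare like their preimages; so do two suffixes at odd positions whose preimages start
with the same letter, while different letters reverse the order; and the comparison of an odd with
an even position depends only on the letter at the odd one. Moreover the letter at `a` is read off
from the comparison of `a` with `a + 1` (`prec_succ`). Hence the pattern of a doubled window is
equivalent to explicit comparisons and letters of the original window (`agree_double`).

Besides `τ(n)` consider three more counts over all windows starting at some `a`:
* `α(n)`, of the patterns of length `n` together with all `n` letters;
* `β(n)`, of the patterns of length `n + 1` without the comparison of the two end positions;
* `γ(n)`, the same as `β(n)` together with all `n + 1` letters.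

Separating even from odd starting positions gives, for `n ≥ 3`, the closed system
`τ(2n) = α(n) + β(n)`, `τ(2n+1) = τ(n+1) + α(n+1)`,
`α(2n) = α(n) + γ(n)`, `α(2n+1) = 2 α(n+1)`,
`β(2n) = β(n) + γ(n)`, `β(2n+1) = α(n+1) + β(n+1)`,
`γ(2n) = 2 γ(n)`, `γ(2n+1) = α(n+1) + γ(n+1)`.

With `δ(n) = n` for powers of two and `δ(n) = 0` otherwise, the relations `β = α`, `γ = α + 2`,
`τ(n+1) = α(n) + δ(n)` and `α(n+1) = α(n) + 2 + δ(n)` propagate through this system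
(`count_relations`), starting from the values for `n = 3, 4, 5`, which are computed by enumerating
the finitely many short windows. Substituting `α(n+1) = τ(n+2) - δ(n+1)` and
`α(n) = β(n) = τ(n+1) - δ(n)` in the first two equations gives the theorem.
-/

/-- The Thue-Morse word: parity of the binary digit sum. -/
def TM (n : ℕ) : ℕ := (Nat.digits 2 n).sum % 2

/-- `Prec a b` : the shift of the Thue-Morse word at `a` is lexicographically
smaller than the shift at `b`. -/
def Prec (a b : ℕ) : Prop :=
  ∃ c : ℕ, (∀ i < c, TM (a + i) = TM (b + i)) ∧ TM (a + c) < TM (b + c)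

/-- The subpermutations of `π_T` of length `N` starting at `a` and `b` coincide. -/
def SamePerm (N a b : ℕ) : Prop :=
  ∀ i < N, ∀ j < N, (Prec (a + i) (a + j) ↔ Prec (b + i) (b + j))

open scoped Classical in
/-- `P a N i` : the 0-indexed rank of position `a+i` within the subpermutation
`π_T[a, a+N-1]`. -/
noncomputable def P (a N i : ℕ) : ℕ :=
  ((Finset.range N).filter (fun j => Prec (a + j) (a + i))).card

/-- The subpermutations `π_T[a,a+N-1]` and `π_T[b,b+N-1]` have the same form. -/
def SameForm (N a b : ℕ) : Prop :=
  ∀ i < N - 1, (Prec (a + i) (a + (i + 1))) ↔ (Prec (b + i) (b + (i + 1)))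

/-- The subpermutation `π_T[a,a+N-1]` is of type `k`. -/
def TypeK (k N a : ℕ) : Prop :=
  1 ≤ k ∧ 2 * k ≤ N ∧
  ∃ ε : ℤ, (ε = 1 ∨ ε = -1) ∧
    ∀ i < k, (P a N i : ℤ) = P a N (N - k + i) + ε

/-- Positions `a` and `b` form a complementary pair of type `k` of length `N`. -/
def CompPair (k N a b : ℕ) : Prop :=
  1 ≤ k ∧ 2 * k ≤ N ∧
  ∃ ε : ℤ, (ε = 1 ∨ ε = -1) ∧
    (∀ i < k,
      (P a N i : ℤ) = P a N (N - k + i) + ε ∧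
      (P b N i : ℤ) = P a N (N - k + i) ∧
      (P b N (N - k + i) : ℤ) = P a N i) ∧
    (∀ j, k ≤ j → j < N - k → P b N j = P a N j)

/-- The permutation complexity of the Thue-Morse word: the number of distinct
subpermutations of `π_T` of length `N`. -/
noncomputable def tau (N : ℕ) : ℕ :=
  Set.ncard (Set.range (fun a : ℕ => fun i j : Fin N => Prec (a + i) (a + j)))

/-! ### The Thue–Morse word under doubling -/

theorem TM_even (n : ℕ) : TM (2 * n) = TM n := by
  rcases Nat.eq_zero_or_pos n with rfl | h
  · rfl
  · unfold TM
    rw [Nat.digits_def' (by norm_num) (by omega)]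
    simp

theorem TM_odd (n : ℕ) : TM (2 * n + 1) = 1 - TM n := by
  unfold TM
  rw [Nat.digits_def' (by norm_num) (by omega)]
  have h1 : (2 * n + 1) % 2 = 1 := by omega
  have h2 : (2 * n + 1) / 2 = n := by omega
  rw [h1, h2, List.sum_cons]
  omega

theorem TM_le (n : ℕ) : TM n ≤ 1 := by unfold TM; omega

theorem TM_cube_free (n : ℕ) : ¬ (TM n = TM (n + 1) ∧ TM (n + 1) = TM (n + 2)) := by
  have key : ∀ m, TM (2 * m) ≠ TM (2 * m + 1) := fun m h => by
    rw [TM_even, TM_odd] at h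
    have := TM_le m
    omega
  rintro ⟨h1, h2⟩
  rcases Nat.even_or_odd' n with ⟨m, rfl | rfl⟩
  · exact key m h1
  · exact key (m + 1) h2

theorem prec_step (a b : ℕ) :
    Prec a b ↔ TM a < TM b ∨ (TM a = TM b ∧ Prec (a + 1) (b + 1)) := by
  constructor
  · rintro ⟨c, hc, hlt⟩
    rcases c with _ | c
    · exact Or.inl hlt
    · refine Or.inr ⟨hc 0 (by omega), c, fun i hi => ?_, ?_⟩
      · have := hc (i + 1) (by omega)
        rwa [← add_assoc, ← add_assoc, add_right_comm a, add_right_comm b] at this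
      · rwa [← add_assoc, ← add_assoc, add_right_comm a, add_right_comm b] at hlt
  · rintro (h | ⟨h, c, hc, hlt⟩)
    · exact ⟨0, by simp, h⟩
    · refine ⟨c + 1, fun i hi => ?_, ?_⟩
      · rcases i with _ | i
        · exact h
        · have := hc i (by omega)
          rwa [add_right_comm a, add_right_comm b] at this
      · rwa [add_right_comm a, add_right_comm b] at hlt

/-- The letter at `a` is read off from comparing `a` with its successor. -/
theorem prec_succ (a : ℕ) : Prec a (a + 1) ↔ TM a = 0 := by
  have h := TM_cube_free a
  have h0 := TM_le a
  have h1 := TM_le (a + 1)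
  have h2 := TM_le (a + 2)
  rw [prec_step, prec_step (a + 1)]
  by_cases e : TM a = TM (a + 1)
  · by_cases e' : TM (a + 1) = TM (a + 2)
    · exact absurd ⟨e, e'⟩ h
    · simp only [e, e', add_assoc, Nat.reduceAdd, false_and, or_false, true_and]
      omega
  · simp only [e, false_and, or_false]
    omega

theorem prec_even_even (a b : ℕ) : Prec (2 * a) (2 * b) ↔ Prec a b := by
  constructor
  · rintro ⟨c, hc, hlt⟩
    rcases Nat.even_or_odd' c with ⟨d, rfl | rfl⟩
    · refine ⟨d, fun i hi => ?_, ?_⟩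
      · have := hc (2 * i) (by omega)
        rwa [← mul_add, ← mul_add, TM_even, TM_even] at this
      · rwa [← mul_add, ← mul_add, TM_even, TM_even] at hlt
    · -- a first difference cannot sit at the second letter of a block `01` or `10`
      have h := hc (2 * d) (by omega)
      rw [← mul_add, ← mul_add, TM_even, TM_even] at h
      rw [← add_assoc, ← add_assoc, ← mul_add, ← mul_add, TM_odd, TM_odd, h] at hlt
      omega
  · rintro ⟨c, hc, hlt⟩
    refine ⟨2 * c, fun i hi => ?_, ?_⟩
    · rcases Nat.even_or_odd' i with ⟨d, rfl | rfl⟩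
      · rw [← mul_add, ← mul_add, TM_even, TM_even, hc d (by omega)]
      · rw [← add_assoc, ← add_assoc, ← mul_add, ← mul_add, TM_odd, TM_odd, hc d (by omega)]
    · rwa [← mul_add, ← mul_add, TM_even, TM_even]

theorem prec_odd_odd (a b : ℕ) :
    Prec (2 * a + 1) (2 * b + 1) ↔ TM b < TM a ∨ (TM a = TM b ∧ Prec a b) := by
  have h0 := TM_le a
  have h1 := TM_le b
  rw [prec_step (2 * a + 1), prec_step a, TM_odd, TM_odd,
    show 2 * a + 1 + 1 = 2 * (a + 1) by ring, show 2 * b + 1 + 1 = 2 * (b + 1) by ring,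
    prec_even_even]
  by_cases e : TM a = TM b
  · simp [e]
  · have e1 : ¬ (1 - TM a = 1 - TM b) := by omega
    simp only [e, e1, false_and, or_false]
    omega

/-- A suffix starting at an odd position is extreme among those starting at even positions:
its comparison with them depends only on its first letter. -/
theorem prec_cross (a b : ℕ) :
    (Prec (2 * a) (2 * b + 1) ↔ TM b = 0) ∧ (Prec (2 * b + 1) (2 * a) ↔ TM b = 1) := by
  have ha := TM_le a
  have ha1 := TM_le (a + 1)
  have hb := TM_le b
  have hb1 := TM_le (b + 1)
  have hb2 := TM_le (b + 2)
  have hc := TM_cube_free b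
  have e1 := TM_even a
  have e2 := TM_odd a
  have e3 : TM (2 * a + 1 + 1) = _ := TM_even (a + 1)
  have e4 : TM (2 * a + 1 + 1 + 1) = _ := TM_odd (a + 1)
  have f1 := TM_odd b
  have f2 : TM (2 * b + 1 + 1) = _ := TM_even (b + 1)
  have f3 : TM (2 * b + 1 + 1 + 1) = _ := TM_odd (b + 1)
  have f4 : TM (2 * b + 1 + 1 + 1 + 1) = _ := TM_even (b + 2)
  rw [prec_step (2 * a), prec_step (2 * a + 1), prec_step (2 * a + 1 + 1),
    prec_step (2 * a + 1 + 1 + 1), prec_step (2 * b + 1), prec_step (2 * b + 1 + 1),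
    prec_step (2 * b + 1 + 1 + 1), prec_step (2 * b + 1 + 1 + 1 + 1), e1, e2, e3, e4, f1, f2, f3, f4]
  generalize Prec (2 * a + 1 + 1 + 1 + 1) _ = p
  generalize Prec (2 * b + 1 + 1 + 1 + 1 + 1) _ = q
  clear e1 e2 e3 e4 f1 f2 f3 f4
  generalize TM a = x at *
  generalize TM (a + 1) = x1 at *
  generalize TM b = y at *
  generalize TM (b + 1) = y1 at *
  generalize TM (b + 2) = y2 at *
  interval_cases x <;> interval_cases x1 <;> interval_cases y <;> interval_cases y1 <;>
    interval_cases y2 <;> simp_all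

/-! ### Agreement of comparisons and letters on a window -/

/-- The comparisons between the positions `s ≤ i, j < e` after `a` and after `b` agree. -/
def Agree (a b s e : ℕ) : Prop :=
  ∀ i j, s ≤ i → i < e → s ≤ j → j < e → (Prec (a + i) (a + j) ↔ Prec (b + i) (b + j))

/-- The letters at the positions `s ≤ i < e` after `a` and after `b` agree. -/
def Letters (a b s e : ℕ) : Prop :=
  ∀ i, s ≤ i → i < e → TM (a + i) = TM (b + i)

theorem TM_eq_iff (a b : ℕ) : TM a = TM b ↔ (TM a = 0 ↔ TM b = 0) := by
  have := TM_le a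
  have := TM_le b
  omega

theorem Agree.mono {a b s e s' e' : ℕ} (h : Agree a b s e) (hs : s ≤ s') (he : e' ≤ e) :
    Agree a b s' e' :=
  fun i j h1 h2 h3 h4 => h i j (by omega) (by omega) (by omega) (by omega)

theorem Agree.letter {a b s e i : ℕ} (h : Agree a b s e) (hs : s ≤ i) (he : i + 1 < e) :
    TM (a + i) = TM (b + i) := by
  have := h i (i + 1) hs (by omega) (by omega) he
  rwa [← add_assoc, ← add_assoc, prec_succ, prec_succ, ← TM_eq_iff] at this

theorem agree_shift (a b s e : ℕ) : Agree (a + 1) (b + 1) s e ↔ Agree a b (s + 1) (e + 1) := by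
  constructor
  · intro h i j h1 h2 h3 h4
    obtain ⟨i, rfl⟩ : ∃ k, i = 1 + k := ⟨i - 1, by omega⟩
    obtain ⟨j, rfl⟩ : ∃ k, j = 1 + k := ⟨j - 1, by omega⟩
    simpa only [add_assoc] using h i j (by omega) (by omega) (by omega) (by omega)
  · intro h i j h1 h2 h3 h4
    simpa only [add_assoc] using h (1 + i) (1 + j) (by omega) (by omega) (by omega) (by omega)

theorem letters_shift (a b s e : ℕ) :
    Letters (a + 1) (b + 1) s e ↔ Letters a b (s + 1) (e + 1) := by
  constructor
  · intro h i h1 h2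
    obtain ⟨i, rfl⟩ : ∃ k, i = 1 + k := ⟨i - 1, by omega⟩
    simpa only [add_assoc] using h i (by omega) (by omega)
  · intro h i h1 h2
    simpa only [add_assoc] using h (1 + i) (by omega) (by omega)

theorem agree_empty (a b s : ℕ) : Agree a b s s := fun i j h1 h2 => by omega

theorem letters_empty (a b s : ℕ) : Letters a b s s := fun i h1 h2 => by omega

/-- Desubstitution of a window with at least two positions: its even positions contribute the
comparisons of `[p, q)`, its odd positions the comparisons and the letters of `[u, v)`, and
comparisons across parities contribute nothing new. -/
theorem agree_double (a b s e p q u v : ℕ) (he : s + 2 ≤ e) (hp : p = (s + 1) / 2)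
    (hq : q = (e + 1) / 2) (hu : u = s / 2) (hv : v = e / 2) :
    Agree (2 * a) (2 * b) s e ↔ Agree a b p q ∧ Agree a b u v ∧ Letters a b u v := by
  subst hp hq hu hv
  have ev : ∀ x i : ℕ, 2 * x + 2 * i = 2 * (x + i) := fun x i => by ring
  have od : ∀ x i : ℕ, 2 * x + (2 * i + 1) = 2 * (x + i) + 1 := fun x i => by ring
  constructor
  · intro h
    have hl : Letters a b (s / 2) (e / 2) := by
      intro i h1 h2
      -- one of the even neighbours `2 * i`, `2 * i + 2` of `2 * i + 1` lies in the window
      obtain ⟨j, hj1, hj2⟩ : ∃ j, s ≤ 2 * j ∧ 2 * j < e := by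
        by_cases hs : s ≤ 2 * i
        · exact ⟨i, by omega, by omega⟩
        · exact ⟨i + 1, by omega, by omega⟩
      have := h (2 * j) (2 * i + 1) hj1 hj2 (by omega) (by omega)
      rwa [ev, od, ev, od, (prec_cross _ _).1, (prec_cross _ _).1, ← TM_eq_iff] at this
    refine ⟨fun i j h1 h2 h3 h4 => ?_, fun i j h1 h2 h3 h4 => ?_, hl⟩
    · have := h (2 * i) (2 * j) (by omega) (by omega) (by omega) (by omega)
      rwa [ev, ev, ev, ev, prec_even_even, prec_even_even] at this
    · have := h (2 * i + 1) (2 * j + 1) (by omega) (by omega) (by omega) (by omega)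
      rw [od, od, od, od, prec_odd_odd, prec_odd_odd, hl i h1 h2, hl j h3 h4] at this
      rw [prec_step (a + i), prec_step (b + i), hl i h1 h2, hl j h3 h4]
      by_cases eq : TM (b + i) = TM (b + j)
      · rw [prec_step (a + i), prec_step (b + i), hl i h1 h2, hl j h3 h4] at this
        simpa [eq] using this
      · simp [eq]
  · rintro ⟨h1, h2, h3⟩ i j hi hi' hj hj'
    rcases Nat.even_or_odd' i with ⟨i, rfl | rfl⟩ <;>
      rcases Nat.even_or_odd' j with ⟨j, rfl | rfl⟩
    · rw [ev, ev, ev, ev, prec_even_even, prec_even_even]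
      exact h1 i j (by omega) (by omega) (by omega) (by omega)
    · rw [ev, ev, od, od, (prec_cross _ _).1, (prec_cross _ _).1, h3 j (by omega) (by omega)]
    · rw [ev, ev, od, od, (prec_cross _ _).2, (prec_cross _ _).2, h3 i (by omega) (by omega)]
    · rw [od, od, od, od, prec_odd_odd, prec_odd_odd, h3 i (by omega) (by omega),
        h3 j (by omega) (by omega), h2 i j (by omega) (by omega) (by omega) (by omega)]

theorem letters_double (a b s e u v : ℕ) (he : s < e)
    (hu : u = s / 2) (hv : v = (e + 1) / 2) :
    Letters (2 * a) (2 * b) s e ↔ Letters a b u v := by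
  subst hu hv
  have ev : ∀ x i : ℕ, 2 * x + 2 * i = 2 * (x + i) := fun x i => by ring
  have od : ∀ x i : ℕ, 2 * x + (2 * i + 1) = 2 * (x + i) + 1 := fun x i => by ring
  constructor
  · intro h i h1 h2
    by_cases hs : s ≤ 2 * i
    · have := h (2 * i) hs (by omega)
      rwa [ev, ev, TM_even, TM_even] at this
    · have := h (2 * i + 1) (by omega) (by omega)
      rw [od, od, TM_odd, TM_odd] at this
      have := TM_le (a + i)
      have := TM_le (b + i)
      omega
  · intro h i h1 h2
    rcases Nat.even_or_odd' i with ⟨i, rfl | rfl⟩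
    · rw [ev, ev, TM_even, TM_even, h i (by omega) (by omega)]
    · rw [od, od, TM_odd, TM_odd, h i (by omega) (by omega)]

/-! ### Counting windows -/

/-- The permutation pattern of the window of length `N` at `a`, the one of the window of length
`M` at `a + 1`, and the first `K` letters from `a` on. With `M = N` the two patterns together are
the pattern of length `N + 1` at `a` without the comparison of its two end positions. -/
def datum (N M K a : ℕ) :
    (Fin N → Fin N → Prop) × (Fin M → Fin M → Prop) × (Fin K → Prop) :=
  (fun i j => Prec (a + i) (a + j), fun i j => Prec (a + 1 + i) (a + 1 + j),
    fun i => TM (a + i) = 0)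

/-- The number of values of `datum N M K`. -/
noncomputable def count (N M K : ℕ) : ℕ := (Set.range (datum N M K)).ncard

theorem datum_eq_iff (N M K a b : ℕ) : datum N M K a = datum N M K b ↔
    Agree a b 0 N ∧ Agree a b 1 (M + 1) ∧ Letters a b 0 K := by
  rw [← agree_shift]
  simp only [datum, Prod.mk.injEq, funext_iff, eq_iff_iff, ← TM_eq_iff, Fin.forall_iff]
  refine and_congr ?_ (and_congr ?_ ?_)
  · exact ⟨fun h i j _ h1 _ h2 => h i h1 j h2, fun h i h1 j h2 => h i j (by omega) h1 (by omega) h2⟩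
  · exact ⟨fun h i j _ h1 _ h2 => h i h1 j h2, fun h i h1 j h2 => h i j (by omega) h1 (by omega) h2⟩
  · exact ⟨fun h i _ h1 => h i h1, fun h i h1 => h i (by omega) h1⟩

theorem tau_eq_count (N : ℕ) : tau N = count N 0 0 := by
  unfold tau count
  have : (fun a : ℕ => fun i j : Fin N => Prec (a + i) (a + j)) =
      Prod.fst ∘ datum N 0 0 := rfl
  rw [this, Set.range_comp, Set.ncard_image_of_injective]
  rintro ⟨x, x', x''⟩ ⟨y, y', y''⟩ h
  exact Prod.ext h (Subsingleton.elim _ _)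

theorem ncard_range_congr {X Y : Type*} (f : ℕ → X) (g : ℕ → Y)
    (h : ∀ a b, f a = f b ↔ g a = g b) : (Set.range f).ncard = (Set.range g).ncard := by
  refine Set.ncard_congr (fun x hx => g hx.choose) (fun x hx => ⟨_, rfl⟩) ?_ ?_
  · intro x y hx hy e
    rw [← hx.choose_spec, ← hy.choose_spec]
    exact (h _ _).2 e
  · rintro _ ⟨a, rfl⟩
    exact ⟨f a, ⟨a, rfl⟩, (h _ _).1 (⟨a, rfl⟩ : ∃ b, f b = f a).choose_spec⟩

/-- Windows of length at least `6` starting at positions of different parity have different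
patterns, since five consecutive letters determine the parity of the position. -/
theorem datum_parity (N M K a b : ℕ) (hN : 6 ≤ N) :
    datum N M K (2 * a) ≠ datum N M K (2 * b + 1) := by
  intro h
  have h := ((datum_eq_iff _ _ _ _ _).1 h).1
  have h0 := h.letter (i := 0) le_rfl (by omega)
  have h1 := h.letter (i := 1) (by omega) (by omega)
  have h2 := h.letter (i := 2) (by omega) (by omega)
  have h3 := h.letter (i := 3) (by omega) (by omega)
  have h4 := h.letter (i := 4) (by omega) (by omega)
  have e0 : TM (2 * a + 0) = _ := TM_even a
  have e1 : TM (2 * a + 1) = _ := TM_odd a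
  have e2 : TM (2 * a + 2) = _ := TM_even (a + 1)
  have e3 : TM (2 * a + 3) = _ := TM_odd (a + 1)
  have e4 : TM (2 * a + 4) = _ := TM_even (a + 2)
  have f0 : TM (2 * b + 1 + 0) = _ := TM_odd b
  have f1 : TM (2 * b + 1 + 1) = _ := TM_even (b + 1)
  have f2 : TM (2 * b + 1 + 2) = _ := TM_odd (b + 1)
  have f3 : TM (2 * b + 1 + 3) = _ := TM_even (b + 2)
  have f4 : TM (2 * b + 1 + 4) = _ := TM_odd (b + 2)
  have := TM_le a
  have := TM_le (a + 1)
  have := TM_le (a + 2)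
  have := TM_le b
  have := TM_le (b + 1)
  have := TM_le (b + 2)
  have := TM_cube_free a
  omega

/-- Splitting a count according to the parity of the starting position. -/
theorem count_split (N M K N₁ M₁ K₁ N₂ M₂ K₂ : ℕ) (hN : 6 ≤ N)
    (h₁ : ∀ a b, (Agree (2 * a) (2 * b) 0 N ∧ Agree (2 * a) (2 * b) 1 (M + 1) ∧
        Letters (2 * a) (2 * b) 0 K) ↔
      (Agree a b 0 N₁ ∧ Agree a b 1 (M₁ + 1) ∧ Letters a b 0 K₁))
    (h₂ : ∀ a b, (Agree (2 * a) (2 * b) 1 (N + 1) ∧ Agree (2 * a) (2 * b) 2 (M + 2) ∧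
        Letters (2 * a) (2 * b) 1 (K + 1)) ↔
      (Agree a b 0 N₂ ∧ Agree a b 1 (M₂ + 1) ∧ Letters a b 0 K₂)) :
    count N M K = count N₁ M₁ K₁ + count N₂ M₂ K₂ := by
  have e₁ : count N₁ M₁ K₁ = (Set.range fun a => datum N M K (2 * a)).ncard :=
    ncard_range_congr _ _ fun a b => by rw [datum_eq_iff, datum_eq_iff, h₁]
  have e₂ : count N₂ M₂ K₂ = (Set.range fun a => datum N M K (2 * a + 1)).ncard :=
    ncard_range_congr _ _ fun a b => by
      rw [datum_eq_iff, datum_eq_iff, agree_shift, agree_shift, letters_shift, h₂]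
  rw [e₁, e₂, ← Set.ncard_union_eq _ (Set.toFinite _) (Set.toFinite _)]
  · unfold count
    congr 1
    ext x
    constructor
    · rintro ⟨a, rfl⟩
      rcases Nat.even_or_odd' a with ⟨b, rfl | rfl⟩
      · exact Or.inl ⟨b, rfl⟩
      · exact Or.inr ⟨b, rfl⟩
    · rintro (⟨a, rfl⟩ | ⟨a, rfl⟩) <;> exact ⟨_, rfl⟩
  · rw [Set.disjoint_left]
    rintro _ ⟨a, rfl⟩ ⟨b, hb⟩
    exact datum_parity N M K a b hN hb.symm

/-! ### The system of recursions

Here `τ(n) = count n 0 0`, `α(n) = count n 0 n`, `β(n) = count n n 0` and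
`γ(n) = count n n (n + 1)`. -/

theorem Letters.mono {a b s e s' e' : ℕ} (h : Letters a b s e) (hs : s ≤ s') (he : e' ≤ e) :
    Letters a b s' e' :=
  fun i h1 h2 => h i (by omega) (by omega)

theorem Agree.letters {a b s e : ℕ} (h : Agree a b s (e + 1)) : Letters a b s e :=
  fun _ h1 h2 => h.letter h1 (by omega)

theorem Letters.glue {a b s e t u : ℕ} (h : Letters a b s e) (h' : Letters a b t u) (hs : t ≤ e) :
    Letters a b s u := fun i h1 h2 => by
  by_cases hi : i < e
  · exact h i h1 hi
  · exact h' i (by omega) h2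

theorem tau_odd (n : ℕ) (hn : 3 ≤ n) :
    count (2 * n + 1) 0 0 = count (n + 1) 0 0 + count (n + 1) 0 (n + 1) := by
  apply count_split _ _ _ _ _ _ _ _ _ (by omega) <;> intro a b
  · rw [agree_double a b 0 (2 * n + 1) 0 (n + 1) 0 n]
    any_goals omega
    simp only [zero_add, agree_empty, letters_empty, and_true]
    exact ⟨fun h => h.1, fun h => ⟨h, h.mono le_rfl (by omega), h.letters⟩⟩
  · rw [agree_double a b 1 (2 * n + 1 + 1) 1 (n + 1) 0 (n + 1)]
    any_goals omega
    simp only [zero_add, agree_empty, letters_empty, and_true, true_and]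
    exact ⟨fun h => h.2, fun h => ⟨h.1.mono (by omega) le_rfl, h⟩⟩

theorem tau_even (n : ℕ) (hn : 3 ≤ n) :
    count (2 * n) 0 0 = count n 0 n + count n n 0 := by
  apply count_split _ _ _ _ _ _ _ _ _ (by omega) <;> intro a b
  · rw [agree_double a b 0 (2 * n) 0 n 0 n]
    any_goals omega
    simp only [zero_add, agree_empty, letters_empty, and_true, true_and]
    exact ⟨fun h => h.2, fun h => ⟨h.1, h⟩⟩
  · rw [agree_double a b 1 (2 * n + 1) 1 (n + 1) 0 n]
    any_goals omega
    simp only [zero_add, agree_empty, letters_empty, and_true]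
    exact ⟨fun h => ⟨h.2.1, h.1⟩,
      fun h => ⟨h.2, h.1, (h.1.mono (e' := 1 + 1) le_rfl (by omega)).letters.glue h.2.letters le_rfl⟩⟩

theorem alpha_odd (n : ℕ) (hn : 3 ≤ n) :
    count (2 * n + 1) 0 (2 * n + 1) = count (n + 1) 0 (n + 1) + count (n + 1) 0 (n + 1) := by
  apply count_split _ _ _ _ _ _ _ _ _ (by omega) <;> intro a b
  · rw [agree_double a b 0 (2 * n + 1) 0 (n + 1) 0 n, letters_double a b 0 (2 * n + 1) 0 (n + 1)]
    any_goals omega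
    simp only [zero_add, agree_empty, true_and]
    exact ⟨fun h => ⟨h.1.1, h.2⟩,
      fun h => ⟨⟨h.1, h.1.mono le_rfl (by omega), h.1.letters⟩, h.2⟩⟩
  · rw [agree_double a b 1 (2 * n + 1 + 1) 1 (n + 1) 0 (n + 1),
      letters_double a b 1 (2 * n + 1 + 1) 0 (n + 1)]
    any_goals omega
    simp only [zero_add, agree_empty, true_and]
    exact ⟨fun h => h.1.2, fun h => ⟨⟨h.1.mono (by omega) le_rfl, h⟩, h.2⟩⟩

theorem alpha_even (n : ℕ) (hn : 3 ≤ n) :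
    count (2 * n) 0 (2 * n) = count n 0 n + count n n (n + 1) := by
  apply count_split _ _ _ _ _ _ _ _ _ (by omega) <;> intro a b
  · rw [agree_double a b 0 (2 * n) 0 n 0 n, letters_double a b 0 (2 * n) 0 n]
    any_goals omega
    simp only [zero_add, agree_empty, true_and]
    exact ⟨fun h => h.1.2, fun h => ⟨⟨h.1, h⟩, h.2⟩⟩
  · rw [agree_double a b 1 (2 * n + 1) 1 (n + 1) 0 n, letters_double a b 1 (2 * n + 1) 0 (n + 1)]
    any_goals omega
    simp only [zero_add, agree_empty, true_and]
    exact ⟨fun h => ⟨h.1.2.1, h.1.1, h.2⟩,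
      fun h => ⟨⟨h.2.1, h.1, h.2.2.mono le_rfl (by omega)⟩, h.2.2⟩⟩

theorem beta_odd (n : ℕ) (hn : 3 ≤ n) :
    count (2 * n + 1) (2 * n + 1) 0 = count (n + 1) 0 (n + 1) + count (n + 1) (n + 1) 0 := by
  apply count_split _ _ _ _ _ _ _ _ _ (by omega) <;> intro a b
  · rw [agree_double a b 0 (2 * n + 1) 0 (n + 1) 0 n,
      agree_double a b 1 (2 * n + 1 + 1) 1 (n + 1) 0 (n + 1)]
    any_goals omega
    simp only [zero_add, agree_empty, letters_empty, true_and, and_true]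
    exact ⟨fun h => h.2.2, fun h => ⟨⟨h.1, h.1.mono le_rfl (by omega), h.1.letters⟩,
      h.1.mono (by omega) le_rfl, h⟩⟩
  · rw [agree_double a b 1 (2 * n + 1 + 1) 1 (n + 1) 0 (n + 1),
      agree_double a b 2 (2 * n + 1 + 2) 1 (n + 2) 1 (n + 1)]
    any_goals omega
    simp only [zero_add, letters_empty, and_true]
    refine ⟨fun h => ⟨h.1.2.1, h.2.1⟩, fun h => ?_⟩
    have hl : Letters a b 0 (n + 1) :=
      (h.1.mono (e' := 1 + 1) le_rfl (by omega)).letters.glue h.2.letters le_rfl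
    exact ⟨⟨h.1.mono (by omega) le_rfl, h.1, hl⟩, h.2, h.1.mono (by omega) le_rfl,
      hl.mono (by omega) le_rfl⟩

theorem beta_even (n : ℕ) (hn : 3 ≤ n) :
    count (2 * n) (2 * n) 0 = count n n 0 + count n n (n + 1) := by
  apply count_split _ _ _ _ _ _ _ _ _ (by omega) <;> intro a b
  · rw [agree_double a b 0 (2 * n) 0 n 0 n, agree_double a b 1 (2 * n + 1) 1 (n + 1) 0 n]
    any_goals omega
    simp only [letters_empty, and_true]
    refine ⟨fun h => ⟨h.1.1, h.2.1⟩, fun h => ?_⟩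
    have hl : Letters a b 0 n :=
      (h.1.mono (e' := 1 + 1) le_rfl (by omega)).letters.glue h.2.letters le_rfl
    exact ⟨⟨h.1, h.1, hl⟩, h.2, h.1, hl⟩
  · rw [agree_double a b 1 (2 * n + 1) 1 (n + 1) 0 n,
      agree_double a b 2 (2 * n + 2) 1 (n + 1) 1 (n + 1)]
    any_goals omega
    simp only [letters_empty, and_true]
    refine ⟨fun h => ⟨h.1.2.1, h.1.1, h.1.2.2.glue h.2.2.2 (by omega)⟩, fun h => ?_⟩
    exact ⟨⟨h.2.1, h.1, h.2.2.mono le_rfl (by omega)⟩, h.2.1, h.2.1,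
      h.2.2.mono (by omega) le_rfl⟩

theorem gamma_odd (n : ℕ) (hn : 3 ≤ n) :
    count (2 * n + 1) (2 * n + 1) (2 * n + 1 + 1) =
      count (n + 1) 0 (n + 1) + count (n + 1) (n + 1) (n + 1 + 1) := by
  apply count_split _ _ _ _ _ _ _ _ _ (by omega) <;> intro a b
  · rw [agree_double a b 0 (2 * n + 1) 0 (n + 1) 0 n,
      agree_double a b 1 (2 * n + 1 + 1) 1 (n + 1) 0 (n + 1),
      letters_double a b 0 (2 * n + 1 + 1) 0 (n + 1)]
    any_goals omega
    simp only [zero_add, agree_empty, true_and]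
    exact ⟨fun h => h.2.1.2, fun h => ⟨⟨h.1, h.1.mono le_rfl (by omega), h.1.letters⟩,
      ⟨h.1.mono (by omega) le_rfl, h⟩, h.2⟩⟩
  · rw [agree_double a b 1 (2 * n + 1 + 1) 1 (n + 1) 0 (n + 1),
      agree_double a b 2 (2 * n + 1 + 2) 1 (n + 2) 1 (n + 1),
      letters_double a b 1 (2 * n + 1 + 1 + 1) 0 (n + 2)]
    any_goals omega
    refine ⟨fun h => ⟨h.1.2.1, h.2.1.1, h.2.2⟩, fun h => ?_⟩
    exact ⟨⟨h.1.mono (by omega) le_rfl, h.1, h.2.2.mono le_rfl (by omega)⟩,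
      ⟨h.2.1, h.1.mono (by omega) le_rfl, h.2.2.mono (by omega) (by omega)⟩, h.2.2⟩

theorem gamma_even (n : ℕ) (hn : 3 ≤ n) :
    count (2 * n) (2 * n) (2 * n + 1) = count n n (n + 1) + count n n (n + 1) := by
  apply count_split _ _ _ _ _ _ _ _ _ (by omega) <;> intro a b
  · rw [agree_double a b 0 (2 * n) 0 n 0 n, agree_double a b 1 (2 * n + 1) 1 (n + 1) 0 n,
      letters_double a b 0 (2 * n + 1) 0 (n + 1)]
    any_goals omega
    refine ⟨fun h => ⟨h.1.1, h.2.1.1, h.2.2⟩, fun h => ?_⟩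
    have hl : Letters a b 0 n := h.2.2.mono le_rfl (by omega)
    exact ⟨⟨h.1, h.1, hl⟩, ⟨h.2.1, h.1, hl⟩, h.2.2⟩
  · rw [agree_double a b 1 (2 * n + 1) 1 (n + 1) 0 n,
      agree_double a b 2 (2 * n + 2) 1 (n + 1) 1 (n + 1),
      letters_double a b 1 (2 * n + 1 + 1) 0 (n + 1)]
    any_goals omega
    refine ⟨fun h => ⟨h.1.2.1, h.1.1, h.2.2⟩, fun h => ?_⟩
    exact ⟨⟨h.2.1, h.1, h.2.2.mono le_rfl (by omega)⟩, ⟨h.2.1, h.2.1,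
      h.2.2.mono (by omega) le_rfl⟩, h.2.2⟩

/-! ### Short windows -/

/-- Recursive evaluation of the letter `TM a`, correct for `a < 2 ^ f`; `true` stands for `1`. -/
def letterB : ℕ → ℕ → Bool
  | 0, _ => false
  | f + 1, a => xor (decide (a % 2 = 1)) (letterB f (a / 2))

/-- Recursive evaluation of `Prec a b`, correct for `a, b < 2 ^ f`. -/
def precB : ℕ → ℕ → ℕ → Bool
  | 0, _, _ => false
  | f + 1, a, b =>
    if a % 2 = 0 then
      if b % 2 = 0 then precB f (a / 2) (b / 2) else !letterB f (b / 2)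
    else
      if b % 2 = 0 then letterB f (a / 2)
      else if letterB f (a / 2) = letterB f (b / 2) then precB f (a / 2) (b / 2)
        else letterB f (a / 2)

theorem letterB_spec (f a : ℕ) (h : a < 2 ^ f) : TM a = (letterB f a).toNat := by
  induction f generalizing a with
  | zero =>
    obtain rfl : a = 0 := by simpa using h
    simp [TM, letterB]
  | succ f ih =>
    rw [pow_succ] at h
    have := ih (a / 2) (by omega)
    rw [letterB]
    rcases Nat.even_or_odd' a with ⟨b, rfl | rfl⟩
    · rw [TM_even]
      simpa using this
    · rw [show (2 * b + 1) / 2 = b by omega] at this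
      rw [TM_odd, this, show (2 * b + 1) / 2 = b by omega, show (2 * b + 1) % 2 = 1 by omega]
      cases letterB f b <;> rfl

theorem precB_spec (f a b : ℕ) (ha : a < 2 ^ f) (hb : b < 2 ^ f) :
    Prec a b ↔ precB f a b = true := by
  induction f generalizing a b with
  | zero =>
    obtain rfl : a = 0 := by simpa using ha
    obtain rfl : b = 0 := by simpa using hb
    simp [Prec, precB]
  | succ f ih =>
    rw [pow_succ] at ha hb
    have h := ih (a / 2) (b / 2) (by omega) (by omega)
    have la := letterB_spec f (a / 2) (by omega)
    have lb := letterB_spec f (b / 2) (by omega)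
    rw [precB]
    rcases Nat.even_or_odd' a with ⟨a, rfl | rfl⟩ <;>
      rcases Nat.even_or_odd' b with ⟨b, rfl | rfl⟩
    · rw [prec_even_even]
      simpa using h
    · rw [(prec_cross _ _).1]
      rw [show (2 * b + 1) / 2 = b by omega] at *
      cases e : letterB f b <;> simp_all
    · rw [(prec_cross _ _).2]
      rw [show (2 * a + 1) / 2 = a by omega] at *
      cases e : letterB f a <;> simp_all
    · rw [prec_odd_odd]
      rw [show (2 * b + 1) / 2 = b by omega, show (2 * a + 1) / 2 = a by omega] at *
      cases e : letterB f a <;> cases e' : letterB f b <;> simp_all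

/-- Computable counterpart of `datum N M K a`, for `a + N`, `a + M + 1` and `a + K` at
most `64`. -/
def datumB (N M K a : ℕ) : List (List Bool) × List (List Bool) × List Bool :=
  ((List.range N).map fun i => (List.range N).map fun j => precB 6 (a + i) (a + j),
    (List.range M).map fun i => (List.range M).map fun j => precB 6 (a + 1 + i) (a + 1 + j),
    (List.range K).map fun i => letterB 6 (a + i))

theorem datumB_eq_iff (N M K a b : ℕ) (ha : a < 48) (hb : b < 48) (hN : N ≤ 15) (hM : M ≤ 15)
    (hK : K ≤ 15) : datum N M K a = datum N M K b ↔ datumB N M K a = datumB N M K b := by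
  have hp : ∀ x y, x < 64 → y < 64 → (Prec x y ↔ precB 6 x y = true) :=
    fun x y hx hy => precB_spec 6 x y hx hy
  have hl : ∀ x, x < 64 → (TM x = 0 ↔ letterB 6 x = false) := fun x hx => by
    rw [letterB_spec 6 x hx, Bool.toNat_eq_zero]
  simp only [datum, datumB, Prod.mk.injEq, funext_iff, eq_iff_iff, Fin.forall_iff,
    List.map_inj_left, List.mem_range]
  refine and_congr ?_ (and_congr ?_ ?_)
  · refine forall₂_congr fun i hi => forall₂_congr fun j hj => ?_
    rw [hp _ _ (by omega) (by omega), hp _ _ (by omega) (by omega), ← Bool.eq_iff_iff]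
  · refine forall₂_congr fun i hi => forall₂_congr fun j hj => ?_
    rw [hp _ _ (by omega) (by omega), hp _ _ (by omega) (by omega), ← Bool.eq_iff_iff]
  · refine forall₂_congr fun i hi => ?_
    rw [hl _ (by omega), hl _ (by omega)]
    cases letterB 6 (a + i) <;> cases letterB 6 (b + i) <;> simp

theorem prec_irrefl (a : ℕ) : ¬ Prec a a := fun ⟨_, _, h⟩ => lt_irrefl _ h

theorem succ_prec (a : ℕ) : Prec (a + 1) a ↔ TM a = 1 := by
  have h := TM_cube_free a
  have h0 := TM_le a
  have h1 := TM_le (a + 1)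
  have h2 := TM_le (a + 2)
  rw [prec_step, prec_step (a + 1 + 1)]
  by_cases e : TM a = TM (a + 1)
  · by_cases e' : TM (a + 1) = TM (a + 2)
    · exact absurd ⟨e, e'⟩ h
    · simp only [e, Ne.symm e', add_assoc, Nat.reduceAdd, false_and, or_false, true_and]
      omega
  · simp only [Ne.symm e, false_and, or_false]
    omega

/-- Blocks of length `16` at multiples of `8` are determined by two letters of the word. -/
theorem agree_block (a b : ℕ) (h0 : TM a = TM b) (h1 : TM (a + 1) = TM (b + 1)) :
    Agree (8 * a) (8 * b) 0 16 ∧ Letters (8 * a) (8 * b) 0 16 := by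
  have step : ∀ e x y, 1 ≤ e → Agree x y 0 e ∧ Letters x y 0 e →
      Agree (2 * x) (2 * y) 0 (2 * e) ∧ Letters (2 * x) (2 * y) 0 (2 * e) := by
    rintro e x y he ⟨h, h'⟩
    rw [agree_double x y 0 (2 * e) 0 e 0 e, letters_double x y 0 (2 * e) 0 e]
    any_goals omega
    exact ⟨⟨h, h, h'⟩, h'⟩
  have base : Agree a b 0 2 ∧ Letters a b 0 2 := by
    constructor
    · intro i j _ hi _ hj
      interval_cases i <;> interval_cases j <;>
        simp [prec_irrefl, prec_succ, succ_prec, h0]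
    · intro i _ hi
      interval_cases i
      · exact h0
      · exact h1
  have := step _ _ _ (by norm_num) (step _ _ _ (by norm_num) (step _ _ _ (by norm_num) base))
  simpa only [← mul_assoc, Nat.reduceMul] using this

/-- The four pairs of consecutive letters all occur at the positions `0`, `1`, `2`, `5`, so the
starting positions below `48` already produce every window of length at most `8`. -/
theorem count_eq_card (N M K : ℕ) (hN : N ≤ 8) (hM : M ≤ 7) (hK : K ≤ 8) :
    count N M K = ((Finset.range 48).image (datumB N M K)).card := by
  classical
  have e : Set.range (datum N M K) = ((Finset.range 48).image (datum N M K) : Finset _) := by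
    ext x
    simp only [Set.mem_range, Finset.coe_image, Set.mem_image, Finset.coe_range, Set.mem_Iio]
    refine ⟨?_, fun ⟨a, _, h⟩ => ⟨a, h⟩⟩
    rintro ⟨a, rfl⟩
    obtain ⟨q, hq, h0, h1⟩ : ∃ q < 6, TM q = TM (a / 8) ∧ TM (q + 1) = TM (a / 8 + 1) := by
      have t0 := letterB_spec 3 0 (by norm_num)
      have t1 := letterB_spec 3 1 (by norm_num)
      have t2 := letterB_spec 3 2 (by norm_num)
      have t3 := letterB_spec 3 3 (by norm_num)
      have t5 := letterB_spec 3 5 (by norm_num)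
      have t6 := letterB_spec 3 6 (by norm_num)
      simp only [letterB] at t0 t1 t2 t3 t5 t6
      norm_num at t0 t1 t2 t3 t5 t6
      have l0 := TM_le (a / 8)
      have l1 := TM_le (a / 8 + 1)
      interval_cases x : TM (a / 8) <;> interval_cases y : TM (a / 8 + 1)
      · exact ⟨5, by norm_num, t5, t6⟩
      · exact ⟨0, by norm_num, t0, t1⟩
      · exact ⟨2, by norm_num, t2, t3⟩
      · exact ⟨1, by norm_num, t1, t2⟩
    obtain ⟨hA, hL⟩ := agree_block q (a / 8) h0 h1
    refine ⟨8 * q + a % 8, by omega, ?_⟩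
    have ha : 8 * (a / 8) + a % 8 = a := Nat.div_add_mod a 8
    rw [datum_eq_iff]
    have hr : a % 8 < 8 := Nat.mod_lt _ (by norm_num)
    generalize a % 8 = r at *
    generalize a / 8 = p at *
    subst ha
    refine ⟨fun i j _ _ _ _ => ?_, fun i j _ _ _ _ => ?_, fun i _ _ => ?_⟩
    · simpa only [add_assoc] using hA (r + i) (r + j) (by omega) (by omega) (by omega) (by omega)
    · simpa only [add_assoc] using hA (r + i) (r + j) (by omega) (by omega) (by omega) (by omega)
    · simpa only [add_assoc] using hL (r + i) (by omega) (by omega)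
  rw [count, e, Set.ncard_coe_finset]
  refine Finset.card_bij (fun x hx => datumB N M K (Finset.mem_image.1 hx).choose) ?_ ?_ ?_
  · intro x hx
    exact Finset.mem_image_of_mem _ (Finset.mem_image.1 hx).choose_spec.1
  · intro x hx y hy h
    have sx := (Finset.mem_image.1 hx).choose_spec
    have sy := (Finset.mem_image.1 hy).choose_spec
    rw [← sx.2, ← sy.2, datumB_eq_iff _ _ _ _ _ (Finset.mem_range.1 sx.1)
      (Finset.mem_range.1 sy.1) (by omega) (by omega) (by omega)]
    exact h
  · intro y hy
    obtain ⟨a, ha, rfl⟩ := Finset.mem_image.1 hy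
    have hx := Finset.mem_image_of_mem (datum N M K) ha
    have sx := (Finset.mem_image.1 hx).choose_spec
    refine ⟨_, hx, ?_⟩
    rw [← datumB_eq_iff _ _ _ _ _ (Finset.mem_range.1 sx.1)
      (Finset.mem_range.1 ha) (by omega) (by omega) (by omega)]
    exact sx.2

theorem count_values :
    (count 4 0 0 = 8 ∧ count 5 0 0 = 14 ∧ count 6 0 0 = 16) ∧
    (count 3 0 3 = 8 ∧ count 4 0 4 = 10 ∧ count 5 0 5 = 16 ∧ count 6 0 6 = 18) ∧
    (count 3 3 0 = 8 ∧ count 4 4 0 = 10 ∧ count 5 5 0 = 16) ∧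
    (count 3 3 4 = 10 ∧ count 4 4 5 = 12 ∧ count 5 5 6 = 18) := by
  refine ⟨⟨?_, ?_, ?_⟩, ⟨?_, ?_, ?_, ?_⟩, ⟨?_, ?_, ?_⟩, ?_, ?_, ?_⟩ <;>
    rw [count_eq_card _ _ _ (by norm_num) (by norm_num) (by norm_num)] <;> decide +kernel

/-! ### Solving the recursions -/

open scoped Classical in
/-- `n` if `n` is a power of two, and `0` otherwise: the defect in the recursion for `tau`. -/
noncomputable def powDefect (n : ℕ) : ℕ := if ∃ k, n = 2 ^ k then n else 0

theorem powDefect_two_mul (n : ℕ) (hn : 1 ≤ n) : powDefect (2 * n) = 2 * powDefect n := by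
  have : (∃ k, 2 * n = 2 ^ k) ↔ ∃ k, n = 2 ^ k := by
    constructor
    · rintro ⟨_ | k, hk⟩
      · omega
      · exact ⟨k, by rw [pow_succ] at hk; omega⟩
    · rintro ⟨k, hk⟩
      exact ⟨k + 1, by rw [pow_succ]; omega⟩
  unfold powDefect
  rw [this]
  split_ifs <;> rfl

theorem powDefect_two_mul_add_one (n : ℕ) (hn : 1 ≤ n) : powDefect (2 * n + 1) = 0 := by
  refine if_neg ?_
  rintro ⟨_ | k, hk⟩
  · omega
  · rw [pow_succ] at hk
    omega

theorem powDefect_pow (k : ℕ) : powDefect (2 ^ k) = 2 ^ k := if_pos ⟨k, rfl⟩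

/-- The linear relations that the four counts of length `n` satisfy; they are preserved by the
recursions from `n` and `n + 1` to `2 * n` and `2 * n + 1`. -/
theorem count_relations (n : ℕ) (hn : 3 ≤ n) :
    count n n 0 = count n 0 n ∧ count n n (n + 1) = count n 0 n + 2 ∧
    count (n + 1) 0 0 = count n 0 n + powDefect n ∧
    count (n + 1) 0 (n + 1) = count n 0 n + 2 + powDefect n := by
  induction n using Nat.strong_induction_on with
  | _ n ih =>
    rcases Nat.lt_or_ge n 6 with h6 | h6
    · obtain ⟨⟨_, _, _⟩, ⟨_, _, _, _⟩, ⟨_, _, _⟩, _, _, _⟩ := count_values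
      have d3 : powDefect 3 = 0 := powDefect_two_mul_add_one 1 le_rfl
      have d4 : powDefect 4 = 4 := powDefect_pow 2
      have d5 : powDefect 5 = 0 := powDefect_two_mul_add_one 2 (by norm_num)
      interval_cases n <;> simp_all
    · rcases Nat.even_or_odd' n with ⟨m, rfl | rfl⟩
      · have hm : 3 ≤ m := by omega
        obtain ⟨h1, h2, h3, h4⟩ := ih m (by omega) hm
        have := tau_odd m hm
        have := alpha_even m hm
        have := alpha_odd m hm
        have := beta_even m hm
        have := gamma_even m hm
        have := powDefect_two_mul m (by omega)
        omega
      · have hm : 3 ≤ m := by omega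
        obtain ⟨h1, h2, h3, h4⟩ := ih (m + 1) (by omega) (by omega)
        have := tau_even (m + 1) (by omega)
        have := alpha_even (m + 1) (by omega)
        have := alpha_odd m hm
        have := beta_odd m hm
        have := gamma_odd m hm
        have := powDefect_two_mul_add_one m (by omega)
        rw [show 2 * m + 1 + 1 = 2 * (m + 1) by ring] at *
        omega

/-- Recursive formulas for the permutation complexity of the Thue-Morse word. -/
theorem tau_recursion :
    (∀ r n : ℕ, 3 ≤ r → 2 * n + 1 = 2 ^ r - 1 →
      (tau (2 * n + 1) : ℤ) = tau (n + 1) + tau (n + 2) - 2 ^ (r - 1)) ∧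
    (∀ r n : ℕ, 3 ≤ r → 2 * n = 2 ^ r →
      (tau (2 * n) : ℤ) = 2 * ((tau (n + 1) : ℤ) - 2 ^ (r - 1))) ∧
    (∀ n : ℕ, 3 ≤ n → (∀ r : ℕ, n + 1 ≠ 2 ^ r) →
      tau (2 * n + 1) = tau (n + 1) + tau (n + 2)) ∧
    (∀ n : ℕ, 3 ≤ n → (∀ r : ℕ, n ≠ 2 ^ r) →
      tau (2 * n) = 2 * tau (n + 1)) := by
  simp only [tau_eq_count]
  refine ⟨fun r n hr h => ?_, fun r n hr h => ?_, fun n hn h => ?_, fun n hn h => ?_⟩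
  · obtain ⟨r, rfl⟩ : ∃ s, r = s + 1 := ⟨r - 1, by omega⟩
    have h4 : 2 ^ 2 ≤ 2 ^ r := Nat.pow_le_pow_right (by norm_num) (by omega)
    rw [pow_succ] at h
    have hp : n + 1 = 2 ^ r := by omega
    have hd := powDefect_pow r
    rw [← hp] at hd
    have := tau_odd n (by omega)
    obtain ⟨_, _, h3, _⟩ := count_relations (n + 1) (by omega)
    have hz : (2 : ℤ) ^ r = n + 1 := by exact_mod_cast hp.symm
    rw [Nat.add_sub_cancel, hz, show n + 2 = n + 1 + 1 by ring]
    omega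
  · obtain ⟨r, rfl⟩ : ∃ s, r = s + 1 := ⟨r - 1, by omega⟩
    have h4 : 2 ^ 2 ≤ 2 ^ r := Nat.pow_le_pow_right (by norm_num) (by omega)
    rw [pow_succ] at h
    have hp : n = 2 ^ r := by omega
    have hd := powDefect_pow r
    rw [← hp] at hd
    have := tau_even n (by omega)
    obtain ⟨h1, _, h3, _⟩ := count_relations n (by omega)
    have hz : (2 : ℤ) ^ r = n := by exact_mod_cast hp.symm
    rw [Nat.add_sub_cancel, hz]
    omega
  · have hd : powDefect (n + 1) = 0 := if_neg fun ⟨k, hk⟩ => h k hk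
    have := tau_odd n hn
    obtain ⟨_, _, h3, _⟩ := count_relations (n + 1) (by omega)
    rw [show n + 2 = n + 1 + 1 by ring]
    omega
  · have hd : powDefect n = 0 := if_neg fun ⟨k, hk⟩ => h k hk
    have := tau_even n hn
    obtain ⟨h1, _, h3, _⟩ := count_relations n hn
    omega
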